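/- arXiv:2412.07442 — 2 statements merged into one kernel-verified Lean document; each statement's English description precedes it below -/
import Mathlib

section
/- Let n ≥ 2, k ≥ 0, and ν ∈ {0,1}. Then the polynomial (1+t)^ν P_k^{1,ν}(t) has non-negative coefficients in its expansion in the polynomials P₀, P₁,…,P_{k+ν}, where P_i := P_i^{0,0}. -/
/-!
Integration against `v_{0,0}` is a linear functional `L` on `ℝ[X]` that is strictly positive on
nonzero polynomials that are non-negative on `(-1,1)`, and orthogonality with respect to `v_{a,b}`
says `L (P_k * q * ((1-X)^a * (1+X)^b)) = 0` for `deg q < k`; the rest is algebra.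

Write `Q = P_k^{1,b}`, `V = (1+X)^b` and `M = L (Q * V)`. If `deg p ≤ k`, then `p - p(1)` is
divisible by `1 - X` with a quotient of degree `< k`, so `L (Q * p * V) = p(1) * M`
(`apply_mul_of_orth`). A monic orthogonal polynomial has no zero `≥ 1`, hence is positive at `1`
(`eval_one_pos`). Taking `p = Q` gives `Q(1) * M = L (Q² V) > 0`, so `M > 0`. Taking `p = P_j` with
`j ≤ k`, the coefficient `c_j` of `V * Q` satisfies `c_j * L (P_j²) = P_j(1) * M > 0`. The only
other possible coefficient is the leading one, which equals `1`.
-/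


open MeasureTheory Polynomial

noncomputable section

/-- The weight `v_{a,b}(t) = (1+t)^{b-1/2} (1-t)^{a+(n-3)/2}`. -/
def vw (n a b : ℕ) (t : ℝ) : ℝ :=
  (1 + t) ^ ((b : ℝ) - 1 / 2) * (1 - t) ^ ((a : ℝ) + ((n : ℝ) - 3) / 2)

/-- `P` is the family of monic orthogonal polynomials with respect to `v_{a,b}` on `[-1,1]`,
with `deg P_k = k`. -/
def IsMonicOrth (n a b : ℕ) (P : ℕ → Polynomial ℝ) : Prop :=
  ∀ k, (P k).Monic ∧ (P k).natDegree = k ∧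
    ∀ q : Polynomial ℝ, q.natDegree < k →
      ∫ t in Set.Ioo (-1 : ℝ) 1, (P k).eval t * q.eval t * vw n a b t = 0

/-- A linear functional that is positive on every nonzero polynomial that is non-negative on
`(-1,1)`. -/
def IsPosFunctional (L : ℝ[X] →ₗ[ℝ] ℝ) : Prop :=
  ∀ p : ℝ[X], p ≠ 0 → (∀ t ∈ Set.Ioo (-1 : ℝ) 1, 0 ≤ p.eval t) → 0 < L p

/-! ### Integration against the weight -/

lemma vw_eq (n a b : ℕ) {t : ℝ} (ht : t ∈ Set.Ioo (-1 : ℝ) 1) :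
    vw n a b t = ((1 - t) ^ a * (1 + t) ^ b) * vw n 0 0 t := by
  have h1 : 0 < 1 + t := by linarith [ht.1]
  have h2 : 0 < 1 - t := by linarith [ht.2]
  unfold vw
  rw [sub_eq_add_neg (b : ℝ), Real.rpow_add h1, Real.rpow_add h2, Real.rpow_natCast,
    Real.rpow_natCast]
  simp only [Nat.cast_zero, zero_sub, zero_add]
  ring

lemma vw_pos (n a b : ℕ) {t : ℝ} (ht : t ∈ Set.Ioo (-1 : ℝ) 1) : 0 < vw n a b t := by
  have h1 : 0 < 1 + t := by linarith [ht.1]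
  have h2 : 0 < 1 - t := by linarith [ht.2]
  unfold vw
  positivity

lemma integrableOn_vw (n : ℕ) (hn : 2 ≤ n) :
    IntegrableOn (vw n 0 0) (Set.Ioo (-1 : ℝ) 1) := by
  have hi : IntervalIntegrable (fun x : ℝ => x ^ (-(1 / 2) : ℝ)) volume 0 2 :=
    intervalIntegral.intervalIntegrable_rpow' (by norm_num)
  have hplus : IntegrableOn (fun t : ℝ => (1 + t) ^ (-(1 / 2) : ℝ)) (Set.Ioo (-1 : ℝ) 1) := by
    have := hi.comp_add_left 1
    norm_num at this
    rw [intervalIntegrable_iff_integrableOn_Ioo_of_le (by norm_num)] at this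
    exact_mod_cast this
  have hminus : IntegrableOn (fun t : ℝ => (1 - t) ^ (-(1 / 2) : ℝ)) (Set.Ioo (-1 : ℝ) 1) := by
    have := (hi.comp_sub_left 1).symm
    norm_num at this
    rw [intervalIntegrable_iff_integrableOn_Ioo_of_le (by norm_num)] at this
    exact_mod_cast this
  have hn' : (2 : ℝ) ≤ n := by exact_mod_cast hn
  -- At most one of `1 + t`, `1 - t` is less than `1`, so the product of their `-1/2` powers is at
  -- most the sum; the remaining factor `(1 - t) ^ ((n - 2) / 2)` is at most `2 ^ ((n - 2) / 2)`.
  refine Integrable.mono' ((hplus.add hminus).const_mul ((2 : ℝ) ^ (((n : ℝ) - 2) / 2))) ?_ ?_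
  · refine Measurable.aestronglyMeasurable ?_
    unfold vw
    fun_prop
  · refine (ae_restrict_iff' measurableSet_Ioo).2 (Filter.Eventually.of_forall fun t ht => ?_)
    rw [Real.norm_of_nonneg (vw_pos n 0 0 ht).le]
    have h1 : 0 < 1 + t := by linarith [ht.1]
    have h2 : 0 < 1 - t := by linarith [ht.2]
    have e : vw n 0 0 t = (1 - t) ^ (((n : ℝ) - 2) / 2) *
        ((1 + t) ^ (-(1 / 2) : ℝ) * (1 - t) ^ (-(1 / 2) : ℝ)) := by
      unfold vw
      have : ((0 : ℕ) : ℝ) + ((n : ℝ) - 3) / 2 = ((n : ℝ) - 2) / 2 + -(1 / 2) := by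
        push_cast; ring
      rw [this, Real.rpow_add h2]
      simp only [Nat.cast_zero, zero_sub]
      ring
    rw [e]
    have hA : 0 < (1 + t) ^ (-(1 / 2) : ℝ) := by positivity
    have hB : 0 < (1 - t) ^ (-(1 / 2) : ℝ) := by positivity
    refine mul_le_mul ?_ ?_ (by positivity) (by positivity)
    · exact Real.rpow_le_rpow h2.le (by linarith [ht.1]) (by linarith)
    · simp only [Pi.add_apply]
      rcases le_total 0 t with h | h
      · have : (1 + t) ^ (-(1 / 2) : ℝ) ≤ 1 :=
          Real.rpow_le_one_of_one_le_of_nonpos (by linarith) (by norm_num)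
        nlinarith
      · have : (1 - t) ^ (-(1 / 2) : ℝ) ≤ 1 :=
          Real.rpow_le_one_of_one_le_of_nonpos (by linarith) (by norm_num)
        nlinarith

lemma integrableOn_eval_mul_vw (n : ℕ) (hn : 2 ≤ n) (p : ℝ[X]) :
    IntegrableOn (fun t => p.eval t * vw n 0 0 t) (Set.Ioo (-1 : ℝ) 1) := by
  obtain ⟨C, hC⟩ := (isCompact_Icc (a := (-1 : ℝ)) (b := 1)).exists_bound_of_continuousOn
    p.continuous.continuousOn
  refine Integrable.bdd_mul (c := C) (integrableOn_vw n hn) p.continuous.aestronglyMeasurable ?_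
  exact (ae_restrict_iff' measurableSet_Ioo).2
    (Filter.Eventually.of_forall fun t ht => hC t (Set.Ioo_subset_Icc_self ht))

lemma exists_functional (n : ℕ) (hn : 2 ≤ n) : ∃ L : ℝ[X] →ₗ[ℝ] ℝ, IsPosFunctional L ∧
    ∀ p, L p = ∫ t in Set.Ioo (-1 : ℝ) 1, p.eval t * vw n 0 0 t := by
  have h_int := integrableOn_eval_mul_vw n hn
  refine ⟨{ toFun := fun p => ∫ t in Set.Ioo (-1 : ℝ) 1, p.eval t * vw n 0 0 t
            map_add' := fun p q => ?_
            map_smul' := fun c p => ?_ }, fun p hp h0 => ?_, fun p => rfl⟩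
  · simp only [eval_add, add_mul]
    exact integral_add (h_int p) (h_int q)
  · simp only [eval_smul, smul_eq_mul, mul_assoc, RingHom.id_apply]
    exact integral_const_mul _ _
  · change 0 < ∫ t in Set.Ioo (-1 : ℝ) 1, p.eval t * vw n 0 0 t
    rw [setIntegral_pos_iff_support_of_nonneg_ae _ (h_int p)]
    · have hsub : Set.Ioo (-1 : ℝ) 1 \ {t | p.IsRoot t} ⊆
          Function.support (fun t => p.eval t * vw n 0 0 t) ∩ Set.Ioo (-1 : ℝ) 1 :=
        fun t ht => ⟨mul_ne_zero ht.2 (vw_pos n 0 0 ht.1).ne', ht.1⟩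
      refine lt_of_lt_of_le ?_ (measure_mono hsub)
      rw [measure_sdiff_null ((finite_setOfPred_isRoot hp).measure_zero _)]
      simp
    · exact (ae_restrict_iff' measurableSet_Ioo).2
        (Filter.Eventually.of_forall fun t ht => mul_nonneg (h0 t ht) (vw_pos n 0 0 ht).le)

lemma IsMonicOrth.apply_eq_zero {n a b : ℕ} {P : ℕ → ℝ[X]} (hP : IsMonicOrth n a b P)
    {L : ℝ[X] →ₗ[ℝ] ℝ} (hL : ∀ p, L p = ∫ t in Set.Ioo (-1 : ℝ) 1, p.eval t * vw n 0 0 t)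
    (k : ℕ) (q : ℝ[X]) (hq : q.natDegree < k) :
    L (P k * q * ((1 - X) ^ a * (1 + X) ^ b)) = 0 := by
  rw [hL, ← (hP k).2.2 q hq]
  refine setIntegral_congr_fun measurableSet_Ioo fun t ht => ?_
  simp only [eval_mul, eval_pow, eval_sub, eval_add, eval_one, eval_X]
  rw [vw_eq n a b ht]
  ring

/-! ### Orthogonality for a positive functional -/

/-- A monic orthogonal polynomial cannot vanish at any `x ≥ 1`: if `P = (X - x) * q`, then `P` is
not orthogonal to `q`, because `(x - X) * q²` is non-negative on `(-1,1)`. -/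
lemma eval_one_pos {L : ℝ[X] →ₗ[ℝ] ℝ} (hpos : IsPosFunctional L) {W : ℝ[X]} (hW : W ≠ 0)
    (hW0 : ∀ t ∈ Set.Ioo (-1 : ℝ) 1, 0 ≤ W.eval t) {P : ℝ[X]} (hP : P.Monic)
    (horth : ∀ q : ℝ[X], q.natDegree < P.natDegree → L (P * q * W) = 0) :
    0 < P.eval 1 := by
  by_contra! hle
  have hdeg : 0 < P.natDegree := by
    rcases Nat.eq_zero_or_pos P.natDegree with h | h
    · rw [hP.natDegree_eq_zero.1 h] at hle
      norm_num at hle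
    · exact h
  have htend := P.tendsto_atTop_of_leadingCoeff_nonneg
    (natDegree_pos_iff_degree_pos.1 hdeg) (by rw [hP.leadingCoeff]; norm_num)
  obtain ⟨y, hy0, hy1⟩ :=
    ((htend.eventually_ge_atTop 0).and (Filter.eventually_ge_atTop 1)).exists
  obtain ⟨x, hx, hx0⟩ := intermediate_value_Icc hy1 P.continuous.continuousOn ⟨hle, hy0⟩
  obtain ⟨q, hq⟩ := dvd_iff_isRoot.2 (show P.IsRoot x from hx0)
  have hq0 : q ≠ 0 := by
    rintro rfl
    exact hP.ne_zero (by simpa using hq)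
  have hqdeg : q.natDegree < P.natDegree := by
    rw [hq, natDegree_mul (X_sub_C_ne_zero x) hq0, natDegree_X_sub_C]
    omega
  have h0 := horth q hqdeg
  have h1 : 0 < L (-(P * q * W)) := by
    refine hpos _ (neg_ne_zero.2 (mul_ne_zero (mul_ne_zero hP.ne_zero hq0) hW)) fun t ht => ?_
    have e : (-(P * q * W)).eval t = (x - t) * (q.eval t ^ 2 * W.eval t) := by
      rw [hq]
      simp only [eval_neg, eval_mul, eval_sub, eval_X, eval_C]
      ring
    rw [e]
    exact mul_nonneg (by linarith [ht.2, hx.1]) (mul_nonneg (sq_nonneg _) (hW0 t ht))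
  rw [map_neg, h0] at h1
  norm_num at h1

/-- Against a `Q` orthogonal for the weight `(1 - X) * V`, the weight `V` acts on polynomials of
degree at most `k` as a multiple of evaluation at `1`. -/
lemma apply_mul_of_orth {L : ℝ[X] →ₗ[ℝ] ℝ} {Q V : ℝ[X]} {k : ℕ}
    (horth : ∀ q : ℝ[X], q.natDegree < k → L (Q * q * ((1 - X) * V)) = 0)
    (p : ℝ[X]) (hp : p.natDegree ≤ k) : L (Q * p * V) = p.eval 1 * L (Q * V) := by
  have hdiv := modByMonic_add_div p (X - C (1 : ℝ))
  rw [modByMonic_X_sub_C_eq_C_eval] at hdiv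
  set q := p /ₘ (X - C (1 : ℝ)) with hqdef
  have hz : L (Q * q * ((1 - X) * V)) = 0 := by
    rcases eq_or_ne q 0 with h | h
    · simp [h]
    · refine horth q ?_
      have h1 : q.natDegree = p.natDegree - 1 := by
        rw [hqdef, natDegree_divByMonic _ (monic_X_sub_C 1), natDegree_X_sub_C]
      have h2 : p.natDegree ≠ 0 := fun h0 => h <| by
        rw [hqdef, divByMonic_eq_zero_iff (monic_X_sub_C 1), degree_X_sub_C]
        exact lt_of_le_of_lt degree_le_natDegree (by rw [h0]; norm_num)
      omega
  have e : Q * p * V = p.eval 1 • (Q * V) - Q * q * ((1 - X) * V) := by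
    conv_lhs => rw [← hdiv]
    rw [smul_eq_C_mul, C_1]
    ring
  rw [e, map_sub, hz, sub_zero, map_smul, smul_eq_mul]

/-! ### Expansion in a monic basis -/

lemma exists_expansion {P : ℕ → ℝ[X]} (hP : ∀ k, (P k).Monic ∧ (P k).natDegree = k) (N : ℕ) :
    ∀ p : ℝ[X], p.degree < N → ∃ c : ℕ → ℝ, p = ∑ j ∈ Finset.range N, C (c j) * P j := by
  induction N with
  | zero =>
    intro p hp
    refine ⟨0, ?_⟩
    simpa using hp
  | succ N ih =>
    intro p hp
    have hcoeff : (P N).coeff N = 1 := by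
      have := (hP N).1.coeff_natDegree
      rwa [(hP N).2] at this
    obtain ⟨c, hc⟩ := ih (p - C (p.coeff N) * P N) <| by
      rw [degree_lt_iff_coeff_zero]
      intro m hm
      rw [coeff_sub, coeff_C_mul]
      rcases hm.eq_or_lt with rfl | h
      · rw [hcoeff]; ring
      · rw [coeff_eq_zero_of_natDegree_lt (p := P N) (by rw [(hP N).2]; exact h),
          (degree_lt_iff_coeff_zero p (N + 1)).1 hp m h]
        ring
    refine ⟨fun j => if j < N then c j else p.coeff N, ?_⟩
    rw [Finset.sum_range_succ, ← sub_eq_iff_eq_add]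
    simp only [lt_irrefl, if_false]
    rw [hc]
    exact Finset.sum_congr rfl fun j hj => by rw [if_pos (Finset.mem_range.1 hj)]

/-- The polynomial `(1+t)^b P_k^{1,b}(t)` has non-negative coefficients in its expansion
in the polynomials `P_0^{0,0}, …, P_{k+b}^{0,0}`. -/
theorem stmt_13 (n k b : ℕ) (hn : 2 ≤ n) (hb : b ≤ 1)
    (P1 P0 : ℕ → Polynomial ℝ)
    (hP1 : IsMonicOrth n 1 b P1) (hP0 : IsMonicOrth n 0 0 P0) :
    ∃ c : ℕ → ℝ, (∀ j, 0 ≤ c j) ∧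
      (1 + Polynomial.X) ^ b * P1 k =
        ∑ j ∈ Finset.range (k + b + 1), Polynomial.C (c j) * P0 j := by
  obtain ⟨L, hpos, hL⟩ := exists_functional n hn
  have hQm := (hP1 k).1
  have hQd := (hP1 k).2.1
  have hXm : (1 + X : ℝ[X]).Monic := by simpa [add_comm] using monic_X_add_C (1 : ℝ)
  have hXd : (1 + X : ℝ[X]).natDegree = 1 := by simpa [add_comm] using natDegree_X_add_C (1 : ℝ)
  set V : ℝ[X] := (1 + X) ^ b with hV
  have hVm : V.Monic := hXm.pow b
  have hVd : V.natDegree = b := by rw [hV, hXm.natDegree_pow, hXd, mul_one]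
  have hV0 : ∀ t ∈ Set.Ioo (-1 : ℝ) 1, 0 ≤ V.eval t := fun t ht => by
    have : 0 ≤ 1 + t := by linarith [ht.1]
    simp only [hV, eval_pow, eval_add, eval_one, eval_X]
    positivity
  have hQorth : ∀ q : ℝ[X], q.natDegree < k → L (P1 k * q * ((1 - X) * V)) = 0 :=
    fun q hq => by simpa using hP1.apply_eq_zero hL k q hq
  have hPorth : ∀ j, ∀ q : ℝ[X], q.natDegree < j → L (P0 j * q) = 0 :=
    fun j q hq => by simpa using hP0.apply_eq_zero hL j q hq
  have hXne : (1 - X : ℝ[X]) ≠ 0 := by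
    rw [← neg_ne_zero, neg_sub]
    exact X_sub_C_ne_zero (1 : ℝ)
  have hQ1 : 0 < (P1 k).eval 1 := by
    refine eval_one_pos hpos (mul_ne_zero hXne hVm.ne_zero) (fun t ht => ?_) hQm
      (by rwa [hQd])
    simp only [eval_mul, eval_sub, eval_one, eval_X]
    exact mul_nonneg (by linarith [ht.2]) (hV0 t ht)
  have hP01 : ∀ j, 0 < (P0 j).eval 1 := fun j =>
    eval_one_pos hpos one_ne_zero (fun t _ => by simp) (hP0 j).1 fun q hq => by
      rw [mul_one]
      exact hPorth j q (by rwa [(hP0 j).2.1] at hq)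
  have hM : 0 < L (P1 k * V) := by
    have h := apply_mul_of_orth hQorth (P1 k) hQd.le
    have h' : 0 < L (P1 k * P1 k * V) := by
      refine hpos _ (mul_ne_zero (mul_ne_zero hQm.ne_zero hQm.ne_zero) hVm.ne_zero)
        fun t ht => ?_
      simp only [eval_mul]
      exact mul_nonneg (mul_self_nonneg _) (hV0 t ht)
    rw [h] at h'
    exact pos_of_mul_pos_right h' hQ1.le
  have hRm : (V * P1 k).Monic := hVm.mul hQm
  have hRd : (V * P1 k).natDegree = k + b := by
    rw [hVm.natDegree_mul hQm, hVd, hQd, add_comm]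
  obtain ⟨c, hc⟩ := exists_expansion (fun j => ⟨(hP0 j).1, (hP0 j).2.1⟩) (k + b + 1) (V * P1 k) <| by
    rw [degree_eq_natDegree hRm.ne_zero, hRd]
    exact_mod_cast Nat.lt_succ_self _
  have hnorm : ∀ j, 0 < L (P0 j * P0 j) := fun j =>
    hpos _ (mul_ne_zero (hP0 j).1.ne_zero (hP0 j).1.ne_zero) fun t _ => by
      rw [eval_mul]
      exact mul_self_nonneg _
  have horth0 : ∀ i j, i ≠ j → L (P0 i * P0 j) = 0 := fun i j hij => by
    rcases lt_or_gt_of_ne hij with h | h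
    · rw [mul_comm]
      exact hPorth j _ (by rwa [(hP0 i).2.1])
    · exact hPorth i _ (by rwa [(hP0 j).2.1])
  have hcj : ∀ j ∈ Finset.range (k + b + 1), 0 ≤ c j := by
    intro j hj
    rcases le_or_gt j k with hjk | hjk
    · have h1 : L (V * P1 k * P0 j) = c j * L (P0 j * P0 j) := by
        rw [hc, Finset.sum_mul, map_sum, Finset.sum_eq_single_of_mem j hj]
        · rw [mul_assoc, ← smul_eq_C_mul, map_smul, smul_eq_mul]
        · intro i _ hij
          rw [mul_assoc, ← smul_eq_C_mul, map_smul, horth0 i j hij, smul_zero]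
      have h2 := apply_mul_of_orth hQorth (P0 j) (by rwa [(hP0 j).2.1])
      rw [show P1 k * P0 j * V = V * P1 k * P0 j by ring, h1] at h2
      have h3 : 0 < c j * L (P0 j * P0 j) := h2 ▸ mul_pos (hP01 j) hM
      exact (pos_of_mul_pos_left h3 (hnorm j).le).le
    · -- Here `b = 1` and `j = k + 1`, so `c j` is the leading coefficient of `V * P1 k`.
      have hj' : j = k + b := by
        have := Finset.mem_range.1 hj
        omega
      have h1 : (V * P1 k).coeff j = 1 := by
        have := hRm.coeff_natDegree
        rwa [hRd, ← hj'] at this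
      have h2 : (P0 j).coeff j = 1 := by
        have := (hP0 j).1.coeff_natDegree
        rwa [(hP0 j).2.1] at this
      rw [hc, finsetSum_coeff, Finset.sum_eq_single_of_mem j hj, coeff_C_mul, h2, mul_one] at h1
      · rw [h1]; norm_num
      · intro i hi hij
        have := Finset.mem_range.1 hi
        rw [coeff_C_mul, coeff_eq_zero_of_natDegree_lt (by rw [(hP0 i).2.1]; omega), mul_zero]
  refine ⟨fun j => if j < k + b + 1 then c j else 0, fun j => ?_, ?_⟩
  · dsimp only
    split_ifs with h
    · exact hcj j (Finset.mem_range.2 h)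
    · exact le_rfl
  · rw [hc]
    exact Finset.sum_congr rfl fun j hj => by simp only [if_pos (Finset.mem_range.1 hj)]
end
end

section
/- Let n ≥ 2, ν ∈ {0,1}, and k ≥ 0. Then for every polynomial p of degree at most k, ∫_{-1}^{1} (1+t)^ν p(t) P_k^{1,ν}(t) v_{0,0}(t) dt = p(1) · ∫_{-1}^{1} (1+t)^ν P_k^{1,ν}(t) v_{0,0}(t) dt. -/
/-!
For `k > 0` write `p = p(1) + (t - 1) q` with `deg q < k`; for `k = 0` the polynomial `p` is constant.
On `(-1,1)` one has `(1+t)^b (1-t) v_{0,0}(t) = v_{1,b}(t)` (`vw_shift`), so the `(t - 1) q` part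
contributes minus the integral of `P_k^{1,b} q` against `v_{1,b}`, which vanishes by orthogonality.
Splitting the integral requires integrability of polynomials against `v_{0,0}`
(`integrableOn_mul_vw`), which follows from that of the Chebyshev weight `(1 - t²)^{-1/2}`.
-/

open MeasureTheory Polynomial

noncomputable section

theorem vw_shift (n b : ℕ) {t : ℝ} (ht : t ∈ Set.Ioo (-1 : ℝ) 1) :
    (1 + t) ^ b * (1 - t) * vw n 0 0 t = vw n 1 b t := by
  have h1 : 0 < 1 + t := by linarith [ht.1]
  have h2 : 0 < 1 - t := by linarith [ht.2]
  unfold vw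
  rw [show (b : ℝ) - 1 / 2 = (b : ℝ) + ((0 : ℕ) - 1 / 2) by push_cast; ring,
    Real.rpow_add h1, Real.rpow_natCast,
    show ((1 : ℕ) : ℝ) + ((n : ℝ) - 3) / 2 = 1 + ((0 : ℕ) + ((n : ℝ) - 3) / 2) by
      push_cast; ring,
    Real.rpow_add h2 1, Real.rpow_one]
  ring

/-- For `n ≥ 2` the weight `v_{0,0}` is the Chebyshev weight times the continuous function
`(1 - t)^{(n-2)/2}`. -/
theorem vw_zero_eq (n : ℕ) {t : ℝ} (ht : t ∈ Set.Ioo (-1 : ℝ) 1) :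
    vw n 0 0 t = (1 - t) ^ (((n : ℝ) - 2) / 2) * √(1 - t ^ 2)⁻¹ := by
  have h1 : 0 < 1 + t := by linarith [ht.1]
  have h2 : 0 < 1 - t := by linarith [ht.2]
  unfold vw
  rw [Real.sqrt_eq_rpow, Real.inv_rpow (by nlinarith), ← Real.rpow_neg (by nlinarith),
    show 1 - t ^ 2 = (1 + t) * (1 - t) by ring, Real.mul_rpow h1.le h2.le,
    show ((0 : ℕ) : ℝ) + ((n : ℝ) - 3) / 2 = ((n : ℝ) - 2) / 2 + -(1 / 2) by push_cast; ring,
    Real.rpow_add h2]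
  norm_num
  ring

theorem integrableOn_mul_vw (n : ℕ) (hn : 2 ≤ n) {f : ℝ → ℝ} (hf : Continuous f) :
    IntegrableOn (fun t => f t * vw n 0 0 t) (Set.Ioo (-1) 1) := by
  have hn' : (0 : ℝ) ≤ ((n : ℝ) - 2) / 2 := by
    have : (2 : ℝ) ≤ n := by exact_mod_cast hn
    linarith
  have hc : Continuous fun t : ℝ => f t * (1 - t) ^ (((n : ℝ) - 2) / 2) :=
    hf.mul ((continuous_const.sub continuous_id).rpow_const fun _ => Or.inr hn')
  have h := Polynomial.Chebyshev.intervalIntegrable_sqrt_one_sub_sq_inv.continuousOn_mul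
    hc.continuousOn
  rw [intervalIntegrable_iff_integrableOn_Ioo_of_le (by norm_num)] at h
  refine h.congr_fun (fun t ht => ?_) measurableSet_Ioo
  simp only [vw_zero_eq n ht]
  ring

/-- For every polynomial `p` of degree at most `k`,
`∫ (1+t)^b p(t) P_k^{1,b}(t) v_{0,0}(t) dt = p(1) ∫ (1+t)^b P_k^{1,b}(t) v_{0,0}(t) dt`. -/
theorem stmt_15 (n k b : ℕ) (hn : 2 ≤ n) (hb : b ≤ 1)
    (P1 : ℕ → Polynomial ℝ) (hP1 : IsMonicOrth n 1 b P1) :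
    ∀ p : Polynomial ℝ, p.natDegree ≤ k →
      ∫ t in Set.Ioo (-1 : ℝ) 1, (1 + t) ^ b * p.eval t * (P1 k).eval t * vw n 0 0 t =
        p.eval 1 * ∫ t in Set.Ioo (-1 : ℝ) 1, (1 + t) ^ b * (P1 k).eval t * vw n 0 0 t := by
  intro p hp
  rcases Nat.eq_zero_or_pos k with rfl | hk
  · -- The orthogonality relation is empty for `k = 0`, but then `p` is constant.
    obtain ⟨c, rfl⟩ := Polynomial.natDegree_eq_zero.mp (Nat.le_zero.mp hp)
    rw [← integral_const_mul]
    congr 1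
    ext t
    simp only [eval_C]
    ring
  · set q := p /ₘ (X - C 1) with hq
    have hqd : q.natDegree < k := by
      rw [hq, natDegree_divByMonic _ (monic_X_sub_C 1), natDegree_X_sub_C]
      omega
    have hpq : ∀ t : ℝ, p.eval t = p.eval 1 + (t - 1) * q.eval t := by
      intro t
      have h := congrArg (eval t) (modByMonic_add_div p (X - C (1 : ℝ)))
      rw [modByMonic_X_sub_C_eq_C_eval] at h
      simpa only [eval_add, eval_mul, eval_sub, eval_X, eval_C] using h.symm
    have horth := (hP1 k).2.2 q hqd
    rw [← integral_const_mul, ← sub_eq_zero, ← integral_sub, ← neg_eq_zero, ← integral_neg,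
      ← horth]
    · refine setIntegral_congr_fun measurableSet_Ioo fun t ht => ?_
      simp only [← vw_shift n b ht, hpq t]
      ring
    · exact integrableOn_mul_vw n hn (by fun_prop)
    · exact (integrableOn_mul_vw n hn (f := fun t => (1 + t) ^ b * (P1 k).eval t)
        (by fun_prop)).const_mul _
end
end
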